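/- In the Hilly regime (n^{3/2}V(A(n))/k(n) → ∞ and m(n)/(V(A(n))·n²) → c for a fixed constant c > 0, with k(n)/√n → ∞), the total variation distance between the standard and planted balls-and-bins distributions satisfies TV_{A(n)}(m(n),n) → 2Φ(1/(2√c)) − 1 as n → ∞, where Φ is the standard normal cumulative distribution function. -/

import Mathlib

/-!
Write `k = ∑ a_i`. The planted distribution is compared with the multinomial distribution that has
the same mean, namely with bin probabilities `p_i = ((m - k)/n + a_i)/m` (`tilt` is `n p_i`).
The relative entropy of the former with respect to the latter is at most
`2 ∑ a_i² / ((m-k)/n)² + k / (2(m-k))` (`kl_bound`). Indeed the logarithm of the density ratio is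
explicit. Its expectation is bounded with the third-order Taylor inequality for `log` and the first
three central moments of a bin count (`expected_log_le`), and the sums of logarithms coming from
the factorials are compared with integrals by the trapezoid rule. The half-logarithm corrections of
the trapezoid rule cancel against the variance terms, so that only second-order errors remain
(`bin_bound`). Passing through the Hellinger distance (`l1_le_sqrt`), the two distributions become
indistinguishable in the Hilly regime, because `∑ a_i² = n V + k²/n` while `m/(k√n) → ∞` and
`m/n → ∞`.

It remains to find the limit of the total variation distance between the uniform multinomial
distribution and the tilted one (`tiltTV`). With `ε_i = n p_i - 1` one has `∑ ε_i = 0` and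
`(m/n) ∑ ε_i² = n² V / m → 1/c`. Under the uniform multinomial distribution the log-likelihood ratio
`∑ z_i log (1 + ε_i)` has characteristic function `((1/n) ∑ (1 + ε_i)^{it})^m`, which tends to that
of `N(-v/2, v)` with `v = 1/c` (`tendsto_charFun_tilt`). By Lévy's convergence theorem the distance
tends to the mean of `(1 - e^X)⁺` for `X ∼ N(-v/2, v)` (`tendsto_tiltTV`). Since `e^x` times the
density of `N(-v/2, v)` is the density of `N(v/2, v)`, this mean is `Φ(√v/2) - Φ(-√v/2)`
(`integral_posPart_gaussianReal`).
-/

open Finset Filter Topology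

/-- Probability of configuration `z` of `m` balls in `n` bins under the standard
(uniform multinomial) distribution ST(m,n). -/
noncomputable def stProb (n m : ℕ) (z : Fin n → ℕ) : ℝ :=
  if ∑ i, z i = m then
    ((Nat.factorial m : ℝ) / ∏ i, (Nat.factorial (z i) : ℝ)) * ((n : ℝ))⁻¹ ^ m
  else 0

/-- Probability of configuration `z` of `m` balls in `n` bins under the planted
distribution PL_A(m,n) with planting `a`. -/
noncomputable def plProb (n m : ℕ) (a : Fin n → ℕ) (z : Fin n → ℕ) : ℝ :=
  if (∑ i, z i = m) ∧ (∀ i, a i ≤ z i) then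
    ((Nat.factorial (m - ∑ i, a i) : ℝ) / ∏ i, (Nat.factorial (z i - a i) : ℝ)) *
      ((n : ℝ))⁻¹ ^ (m - ∑ i, a i)
  else 0

/-- Expectation of a statistic `T` with respect to a probability function `p` on
configurations. -/
noncomputable def expec {n : ℕ} (p : (Fin n → ℕ) → ℝ) (T : (Fin n → ℕ) → ℝ) : ℝ :=
  ∑' z : Fin n → ℕ, p z * T z

/-- Variance of a statistic `T` with respect to a probability function `p`. -/
noncomputable def varOf {n : ℕ} (p : (Fin n → ℕ) → ℝ) (T : (Fin n → ℕ) → ℝ) : ℝ :=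
  ∑' z : Fin n → ℕ, p z * (T z - expec p T) ^ 2

/-- Probability of a set `s` of configurations with respect to a probability
function `p`. -/
noncomputable def probOf {n : ℕ} (p : (Fin n → ℕ) → ℝ) (s : Set (Fin n → ℕ)) : ℝ :=
  ∑' z : Fin n → ℕ, Set.indicator s p z

/-- `V(A) = (Σ_i a_i²)/n − k²/n²` where `k = Σ_i a_i`. -/
noncomputable def plantV (n : ℕ) (a : Fin n → ℕ) : ℝ :=
  (∑ i, (a i : ℝ) ^ 2) / n - ((∑ i, (a i : ℝ)) / n) ^ 2

/-- `q_i = (n/m)(z_i − m/n)`. -/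
noncomputable def qStat (n m : ℕ) (z : Fin n → ℕ) (i : Fin n) : ℝ :=
  ((n : ℝ) / m) * ((z i : ℝ) - (m : ℝ) / n)

/-- The Hilly-regime statistic `H_A(Z) = Σ_i a_i q_i`. -/
noncomputable def HStat (n m : ℕ) (a : Fin n → ℕ) (z : Fin n → ℕ) : ℝ :=
  ∑ i, (a i : ℝ) * qStat n m z i

/-- The Flat-regime statistic `F_A(Z) = Σ_i a_i q_i²`. -/
noncomputable def FStat (n m : ℕ) (a : Fin n → ℕ) (z : Fin n → ℕ) : ℝ :=
  ∑ i, (a i : ℝ) * qStat n m z i ^ 2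

/-- The Intermediate-regime statistic `I_A(Z) = Σ_i a_i q_i − (1/2) Σ_i a_i q_i²`. -/
noncomputable def IStat (n m : ℕ) (a : Fin n → ℕ) (z : Fin n → ℕ) : ℝ :=
  HStat n m a z - (1/2) * FStat n m a z

/-- The standard normal cumulative distribution function `Φ`. -/
noncomputable def stdNormalCDF (x : ℝ) : ℝ :=
  ∫ t in Set.Iic x, Real.exp (-t ^ 2 / 2) / Real.sqrt (2 * Real.pi)

/-- Total variation distance `TV_A(m,n)` between ST(m,n) and PL_A(m,n). -/
noncomputable def tvDist (n m : ℕ) (a : Fin n → ℕ) : ℝ :=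
  (1/2) * ∑' z : Fin n → ℕ, |stProb n m z - plProb n m a z|

/-- The Flat regime: `n^{3/2} V(A)/k → 0` and `m/(k n^{1/2}) → c`. -/
def FlatRegime (A : (n : ℕ) → Fin n → ℕ) (m k : ℕ → ℕ) (c : ℝ) : Prop :=
  Tendsto (fun n : ℕ => (n : ℝ) ^ ((3 : ℝ)/2) * plantV n (A n) / (k n : ℝ)) atTop (𝓝 0) ∧
  Tendsto (fun n : ℕ => (m n : ℝ) / ((k n : ℝ) * Real.sqrt n)) atTop (𝓝 c)

/-- The Intermediate regime: `n^{3/2} V(A)/k → λ` and `m/(k n^{1/2}) → c`. -/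
def IntermediateRegime (A : (n : ℕ) → Fin n → ℕ) (m k : ℕ → ℕ) (lam c : ℝ) : Prop :=
  Tendsto (fun n : ℕ => (n : ℝ) ^ ((3 : ℝ)/2) * plantV n (A n) / (k n : ℝ)) atTop (𝓝 lam) ∧
  Tendsto (fun n : ℕ => (m n : ℝ) / ((k n : ℝ) * Real.sqrt n)) atTop (𝓝 c)

/-- The Hilly regime: `n^{3/2} V(A)/k → ∞` and `m/(V(A) n²) → c`. -/
def HillyRegime (A : (n : ℕ) → Fin n → ℕ) (m k : ℕ → ℕ) (c : ℝ) : Prop :=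
  Tendsto (fun n : ℕ => (n : ℝ) ^ ((3 : ℝ)/2) * plantV n (A n) / (k n : ℝ)) atTop atTop ∧
  Tendsto (fun n : ℕ => (m n : ℝ) / (plantV n (A n) * (n : ℝ) ^ 2)) atTop (𝓝 c)

/-- One of the three regimes holds (with its positive constants). -/
def SomeRegime (A : (n : ℕ) → Fin n → ℕ) (m k : ℕ → ℕ) : Prop :=
  (∃ c : ℝ, 0 < c ∧ FlatRegime A m k c) ∨
  (∃ lam c : ℝ, 0 < lam ∧ 0 < c ∧ IntermediateRegime A m k lam c) ∨
  (∃ c : ℝ, 0 < c ∧ HillyRegime A m k c)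

/-! ### Deterministic inequalities -/

/-- Third-order Taylor upper bound for the logarithm, valid on the whole domain `t > -1`. -/
lemma log_one_add_le_cubic {t : ℝ} (ht : -1 < t) :
    Real.log (1 + t) ≤ t - t ^ 2 / 2 + t ^ 3 / 3 := by
  set g : ℝ → ℝ := fun t => t - t ^ 2 / 2 + t ^ 3 / 3 - Real.log (1 + t) with hg
  have hd : ∀ x : ℝ, -1 < x → HasDerivAt g (x ^ 3 / (1 + x)) x := by
    intro x hx
    have h1 : (1 + x) ≠ 0 := by linarith
    have h := ((((hasDerivAt_id x).sub (((hasDerivAt_id x).pow 2).div_const 2)).add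
      (((hasDerivAt_id x).pow 3).div_const 3)).sub (((hasDerivAt_id x).const_add 1).log h1))
    convert! h using 1
    simp only [id, Nat.cast_ofNat]
    field_simp
    ring
  have h0 : g 0 = 0 := by simp [hg]
  have key : g 0 ≤ g t := by
    rcases le_total 0 t with h | h
    · have hm : MonotoneOn g (Set.Ici 0) := by
        apply monotoneOn_of_deriv_nonneg (convex_Ici 0)
        · intro x hx
          exact (hd x (by linarith [Set.mem_Ici.1 hx])).continuousAt.continuousWithinAt
        · intro x hx
          rw [interior_Ici] at hx
          exact (hd x (by linarith [Set.mem_Ioi.1 hx])).differentiableAt.differentiableWithinAt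
        · intro x hx
          rw [interior_Ici] at hx
          have hx' := Set.mem_Ioi.1 hx
          rw [(hd x (by linarith)).deriv]
          positivity
      exact hm (Set.mem_Ici.2 le_rfl) h h
    · have hm : AntitoneOn g (Set.Ioc (-1) 0) := by
        apply antitoneOn_of_deriv_nonpos (convex_Ioc _ _)
        · intro x hx
          exact (hd x hx.1).continuousAt.continuousWithinAt
        · intro x hx
          rw [interior_Ioc] at hx
          exact (hd x hx.1).differentiableAt.differentiableWithinAt
        · intro x hx
          rw [interior_Ioc] at hx
          rw [(hd x hx.1).deriv]
          have h2 : x ^ 3 ≤ 0 := by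
            have : x ^ 3 = x * x ^ 2 := by ring
            rw [this]
            exact mul_nonpos_of_nonpos_of_nonneg hx.2.le (sq_nonneg x)
          exact div_nonpos_of_nonpos_of_nonneg h2 (by linarith [hx.1])
      exact hm ⟨ht, h⟩ ⟨by norm_num, le_rfl⟩ h
  rw [h0] at key
  simp only [hg] at key
  linarith

/-- The primitive `x log x - x` of the logarithm. -/
noncomputable def logPrim (x : ℝ) : ℝ := x * Real.log x - x

/-- The trapezoid rule underestimates the integral of the concave function `log`. -/
lemma trapezoid_log {x : ℝ} (hx : 0 < x) :
    (Real.log x + Real.log (x + 1)) / 2 ≤ logPrim (x + 1) - logPrim x := by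
  -- equivalent to `(x + 1/2) log (1 + 1/x) ≥ 1`
  have h := Real.le_log_one_add_of_nonneg (x := 1 / x) (by positivity)
  have e : Real.log (1 + 1 / x) = Real.log (x + 1) - Real.log x := by
    rw [← Real.log_div (by positivity) hx.ne']
    congr 1
    field_simp
  rw [e] at h
  have h2 : 2 * (1 / x) / (1 / x + 2) = 2 / (2 * x + 1) := by field_simp; ring
  rw [h2, div_le_iff₀ (by positivity)] at h
  unfold logPrim
  nlinarith

lemma sum_log_le {x : ℝ} (hx : 0 < x) (a : ℕ) :
    ∑ s ∈ range a, Real.log (x + s + 1) ≤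
      logPrim (x + a) - logPrim x + (Real.log (x + a) - Real.log x) / 2 := by
  induction a with
  | zero => simp
  | succ a ih =>
    rw [sum_range_succ]
    have h := trapezoid_log (x := x + a) (by positivity)
    push_cast
    rw [← add_assoc]
    linarith

lemma le_sum_log {x : ℝ} (hx : 0 < x) (a : ℕ) :
    logPrim (x + a) - logPrim x ≤ ∑ s ∈ range a, Real.log (x + s + 1) := by
  induction a with
  | zero => simp
  | succ a ih =>
    rw [sum_range_succ]
    push_cast
    rw [← add_assoc]
    set y := x + a with hy
    have hy0 : 0 < y := by positivity
    have h := Real.log_le_sub_one_of_pos (x := (y + 1) / y) (by positivity)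
    rw [Real.log_div (by positivity) hy0.ne'] at h
    have e : (y + 1) / y - 1 = 1 / y := by field_simp; ring
    rw [e, le_div_iff₀ hy0] at h
    unfold logPrim at *
    nlinarith

lemma le_sum_inv_sq {x : ℝ} (hx : 0 < x) (a : ℕ) :
    a / ((x + 1) * (x + a + 1)) ≤ ∑ s ∈ range a, 1 / (x + s + 1) ^ 2 := by
  induction a with
  | zero => simp
  | succ a ih =>
    rw [sum_range_succ]
    push_cast
    have h : (a + 1 : ℝ) / ((x + 1) * (x + (a + 1) + 1)) - a / ((x + 1) * (x + a + 1))
        ≤ 1 / (x + a + 1) ^ 2 := by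
      have e : (a + 1 : ℝ) / ((x + 1) * (x + (a + 1) + 1)) - a / ((x + 1) * (x + a + 1))
          = 1 / ((x + a + 1) * (x + a + 2)) := by
        field_simp
        ring
      rw [e]
      apply one_div_le_one_div_of_le (by positivity)
      rw [sq]
      gcongr
      linarith
    linarith

/-- Second-order control of the contribution of one bin holding `a` planted balls to the relative
entropy. The half-logarithm from the trapezoid rule cancels the variance term up to
`O(a² / x²)`, using `a ≤ a²` for natural `a`. -/
lemma bin_bound {x r : ℝ} (hx : 0 < x) (hr : 0 ≤ r) (a : ℕ) :
    ∑ s ∈ range a, (Real.log (x + s + 1) - x * (1 - r) / (2 * (x + s + 1) ^ 2)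
        + x / (3 * (x + s + 1) ^ 3)) ≤
      logPrim (x + a) - logPrim x + 2 * a ^ 2 / x ^ 2 + a * r / (2 * x) := by
  have ha : (a : ℝ) ≤ (a : ℝ) ^ 2 := by
    exact_mod_cast Nat.le_self_pow two_ne_zero a
  have ha0 : (0 : ℝ) ≤ a := by positivity
  have h1 := sum_log_le hx a
  have h2 := le_sum_inv_sq hx a
  -- cubic term
  have h3 : ∑ s ∈ range a, x / (3 * (x + s + 1) ^ 3) ≤ a / (3 * x ^ 2) := by
    have : ∀ s ∈ range a, x / (3 * (x + s + 1) ^ 3) ≤ 1 / (3 * x ^ 2) := by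
      intro s _
      rw [div_le_div_iff₀ (by positivity) (by positivity)]
      have : x ^ 3 ≤ (x + s + 1) ^ 3 := by
        gcongr
        have : (0 : ℝ) ≤ s := by positivity
        linarith
      nlinarith
    calc _ ≤ ∑ s ∈ range a, 1 / (3 * x ^ 2) := sum_le_sum this
      _ = a / (3 * x ^ 2) := by simp [div_eq_mul_inv]
  -- part of the variance term proportional to `r`
  have h4 : ∑ s ∈ range a, 1 / (x + s + 1) ^ 2 ≤ a / x ^ 2 := by
    have : ∀ s ∈ range a, 1 / (x + s + 1) ^ 2 ≤ 1 / x ^ 2 := by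
      intro s _
      apply one_div_le_one_div_of_le (by positivity)
      gcongr
      have : (0 : ℝ) ≤ s := by positivity
      linarith
    calc _ ≤ ∑ s ∈ range a, 1 / x ^ 2 := sum_le_sum this
      _ = a / x ^ 2 := by simp [div_eq_mul_inv]
  have h5 : Real.log (x + a) - Real.log x ≤ a / x := by
    rw [← Real.log_div (by positivity) hx.ne']
    have := Real.log_le_sub_one_of_pos (x := (x + a) / x) (by positivity)
    have e : (x + a) / x - 1 = a / x := by field_simp; ring
    linarith
  have e : ∑ s ∈ range a, (Real.log (x + s + 1) - x * (1 - r) / (2 * (x + s + 1) ^ 2)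
        + x / (3 * (x + s + 1) ^ 3)) =
      ∑ s ∈ range a, Real.log (x + s + 1) - x / 2 * ∑ s ∈ range a, 1 / (x + s + 1) ^ 2
        + x * r / 2 * ∑ s ∈ range a, 1 / (x + s + 1) ^ 2
        + ∑ s ∈ range a, x / (3 * (x + s + 1) ^ 3) := by
    rw [mul_sum, mul_sum, ← sum_sub_distrib, ← sum_add_distrib, ← sum_add_distrib]
    refine sum_congr rfl fun s _ => ?_
    have : x + s + 1 ≠ 0 := by positivity
    field_simp
    ring
  rw [e]
  have h6 : x / 2 * (a / ((x + 1) * (x + a + 1))) ≤ x / 2 * ∑ s ∈ range a, 1 / (x + s + 1) ^ 2 := by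
    gcongr
  have h7 : x * r / 2 * ∑ s ∈ range a, 1 / (x + s + 1) ^ 2 ≤ x * r / 2 * (a / x ^ 2) := by
    gcongr
  have e7 : x * r / 2 * (a / x ^ 2) = a * r / (2 * x) := by field_simp
  have h8 : a / x / 2 - x / 2 * (a / ((x + 1) * (x + a + 1))) ≤ a * (a + 2) / (2 * x ^ 2) := by
    have e8 : a / x / 2 - x / 2 * (a / ((x + 1) * (x + a + 1)))
        = a * ((x + 1) * (x + a + 1) - x ^ 2) / (2 * x * ((x + 1) * (x + a + 1))) := by
      field_simp
    rw [e8, div_le_div_iff₀ (by positivity) (by positivity)]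
    have : ((x + 1) * (x + a + 1) - x ^ 2) * x ≤ (a + 2) * ((x + 1) * (x + a + 1)) := by
      nlinarith [mul_nonneg ha0 hx.le, mul_nonneg (mul_nonneg ha0 hx.le) ha0, sq_nonneg x,
        mul_nonneg ha0 (sq_nonneg x), sq_nonneg (a : ℝ)]
    have h9 := mul_le_mul_of_nonneg_left this (mul_nonneg ha0 hx.le)
    nlinarith
  have h10 : a * (a + 2) / (2 * x ^ 2) + a / (3 * x ^ 2) ≤ 2 * a ^ 2 / x ^ 2 := by
    rw [div_add_div _ _ (by positivity) (by positivity), div_le_div_iff₀ (by positivity)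
      (by positivity)]
    have hx4 : 0 ≤ x ^ 4 := by positivity
    nlinarith [mul_le_mul_of_nonneg_right ha hx4]
  linarith

/-! ### Multinomial sums -/

/-- The configurations of `m` balls in `n` bins. -/
abbrev confs (n m : ℕ) : Finset (Fin n → ℕ) := piAntidiag univ m

lemma mem_confs {n m : ℕ} {z : Fin n → ℕ} : z ∈ confs n m ↔ ∑ i, z i = m := by
  simp [confs]

lemma stProb_nonneg (n m : ℕ) (z : Fin n → ℕ) : 0 ≤ stProb n m z := by
  unfold stProb
  split_ifs <;> positivity

lemma stProb_of_mem {n m : ℕ} {z : Fin n → ℕ} (hz : z ∈ confs n m) :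
    stProb n m z = (Nat.factorial m : ℝ) / (∏ i, (Nat.factorial (z i) : ℝ)) * (n : ℝ)⁻¹ ^ m := by
  rw [stProb, if_pos (mem_confs.1 hz)]

lemma stProb_pos {n m : ℕ} (hn : 0 < n) {z : Fin n → ℕ} (hz : z ∈ confs n m) :
    0 < stProb n m z := by
  rw [stProb_of_mem hz]
  positivity

lemma stProb_eq_multinomial {n m : ℕ} {z : Fin n → ℕ} (hz : z ∈ confs n m) :
    stProb n m z = (Nat.multinomial univ z : ℝ) * (n : ℝ)⁻¹ ^ m := by
  rw [stProb_of_mem hz]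
  congr 1
  have h := Nat.multinomial_spec (univ : Finset (Fin n)) z
  rw [mem_confs.1 hz] at h
  rw [div_eq_iff (by positivity), ← h]
  push_cast
  ring

/-- The probability generating function of the uniform multinomial distribution. -/
lemma sum_stProb_mul_prod {K : Type*} [RCLike K] (n m : ℕ) (x : Fin n → K) :
    ∑ z ∈ confs n m, (stProb n m z : K) * ∏ i, x i ^ z i = ((∑ i, x i) / n) ^ m := by
  rw [div_pow, sum_pow_eq_sum_piAntidiag, sum_div]
  refine sum_congr rfl fun z hz => ?_
  rw [stProb_eq_multinomial hz]
  push_cast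
  rw [inv_pow]
  ring

lemma sum_stProb {n : ℕ} (hn : 0 < n) (m : ℕ) : ∑ z ∈ confs n m, stProb n m z = 1 := by
  have h := sum_stProb_mul_prod (K := ℝ) n m (fun _ => 1)
  have hn' : (n : ℝ) ≠ 0 := by positivity
  simpa [hn'] using h

/-- The probability generating function of one bin count. -/
lemma sum_stProb_mul_pow (n m : ℕ) (i : Fin n) (x : ℝ) :
    ∑ z ∈ confs n m, stProb n m z * x ^ z i = ((n - 1 + x) / n) ^ m := by
  have h := sum_stProb_mul_prod (K := ℝ) n m (fun j => if j = i then x else 1)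
  have e : ∑ j : Fin n, (if j = i then x else 1 : ℝ) = n - 1 + x := by
    have : ∀ j : Fin n, (if j = i then x else 1 : ℝ) = 1 + (if j = i then x - 1 else 0) := by
      intro j
      split_ifs <;> ring
    simp_rw [this]
    rw [sum_add_distrib]
    simp
    ring
  rw [e] at h
  rw [← h]
  refine sum_congr rfl fun z _ => ?_
  simp [ite_pow, prod_ite_eq']

lemma cast_mul_pred (a : ℕ) : (a : ℝ) * ((a - 1 : ℕ) : ℝ) = a * (a - 1) := by
  rcases a with _ | a
  · simp
  · push_cast
    simp

lemma cast_mul_pred_pred (a : ℕ) :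
    (a : ℝ) * (a - 1) * ((a - 1 - 1 : ℕ) : ℝ) = a * (a - 1) * (a - 2) := by
  rcases a with _ | _ | a
  · simp
  · simp
  · rw [show a + 1 + 1 - 1 - 1 = a by omega]
    push_cast
    ring

/-- The first three factorial moments of one bin count, read off from the derivatives of its
generating function at `1`. -/
lemma factorial_moments {n : ℕ} (hn : 0 < n) (m : ℕ) (i : Fin n) :
    ∑ z ∈ confs n m, stProb n m z * (z i : ℝ) = m / n ∧
    ∑ z ∈ confs n m, stProb n m z * ((z i : ℝ) * (z i - 1)) = m * (m - 1) / n ^ 2 ∧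
    ∑ z ∈ confs n m, stProb n m z * ((z i : ℝ) * (z i - 1) * (z i - 2)) =
      m * (m - 1) * (m - 2) / n ^ 3 := by
  have hn' : (n : ℝ) ≠ 0 := by positivity
  have hL : ∀ (c : (Fin n → ℕ) → ℝ) (e : (Fin n → ℕ) → ℕ) (x : ℝ),
      HasDerivAt (fun x : ℝ => ∑ z ∈ confs n m, c z * x ^ e z)
        (∑ z ∈ confs n m, c z * (e z * x ^ (e z - 1))) x := by
    intro c e x
    apply HasDerivAt.fun_sum
    intro z _
    exact (hasDerivAt_pow (e z) x).const_mul (c z)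
  have hR : ∀ (C : ℝ) (e : ℕ) (x : ℝ),
      HasDerivAt (fun x : ℝ => C * ((n - 1 + x) / n) ^ e)
        (C * (e * ((n - 1 + x) / n) ^ (e - 1) * (1 / n))) x := by
    intro C e x
    exact (((((hasDerivAt_id x).const_add ((n : ℝ) - 1)).div_const (n : ℝ)).pow e).const_mul C)
  have h0 : (fun x : ℝ => ∑ z ∈ confs n m, stProb n m z * x ^ z i) =
      fun x : ℝ => (1 : ℝ) * (((n : ℝ) - 1 + x) / n) ^ m := by
    funext x
    rw [sum_stProb_mul_pow, one_mul]
  have h1 : (fun x : ℝ => ∑ z ∈ confs n m, (stProb n m z * z i) * x ^ (z i - 1)) =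
      fun x : ℝ => ((m : ℝ) / n) * (((n : ℝ) - 1 + x) / n) ^ (m - 1) := by
    funext x
    have hl := hL (stProb n m) (fun z => z i) x
    rw [h0] at hl
    have := hl.unique (hR 1 m x)
    calc _ = ∑ z ∈ confs n m, stProb n m z * ((z i : ℝ) * x ^ (z i - 1)) :=
          sum_congr rfl fun z _ => by ring
      _ = _ := this
      _ = _ := by ring
  have h2 : (fun x : ℝ => ∑ z ∈ confs n m, (stProb n m z * (z i * (z i - 1))) * x ^ (z i - 1 - 1)) =
      fun x : ℝ => ((m : ℝ) * (m - 1) / n ^ 2) * (((n : ℝ) - 1 + x) / n) ^ (m - 1 - 1) := by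
    funext x
    have hl := hL (fun z => stProb n m z * z i) (fun z => z i - 1) x
    rw [h1] at hl
    have := hl.unique (hR (m / n) (m - 1) x)
    calc _ = ∑ z ∈ confs n m, stProb n m z * z i * (((z i - 1 : ℕ) : ℝ) * x ^ (z i - 1 - 1)) :=
          sum_congr rfl fun z _ => by
            rw [← cast_mul_pred]
            ring
      _ = _ := this
      _ = _ := by
          rw [← cast_mul_pred]
          field_simp
  have h3 : ∑ z ∈ confs n m, stProb n m z * ((z i : ℝ) * (z i - 1) * (z i - 2)) =
      m * (m - 1) * (m - 2) / n ^ 3 := by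
    have hl := hL (fun z => stProb n m z * (z i * (z i - 1))) (fun z => z i - 1 - 1) 1
    rw [h2] at hl
    have := hl.unique (hR (m * (m - 1) / n ^ 2) (m - 1 - 1) 1)
    calc _ = ∑ z ∈ confs n m, stProb n m z * (z i * (z i - 1)) *
            (((z i - 1 - 1 : ℕ) : ℝ) * 1 ^ (z i - 1 - 1 - 1)) :=
          sum_congr rfl fun z _ => by
            rw [← cast_mul_pred_pred]
            simp
            ring
      _ = _ := this
      _ = _ := by
          rw [← cast_mul_pred_pred]
          simp only [sub_add_cancel, div_self hn', one_pow]
          field_simp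
  refine ⟨?_, ?_, h3⟩
  · have := congrFun h1 1
    simpa [hn'] using this
  · have := congrFun h2 1
    simpa [hn'] using this

lemma central_moments {n : ℕ} (hn : 0 < n) (m : ℕ) (i : Fin n) :
    ∑ z ∈ confs n m, stProb n m z * ((z i : ℝ) - m / n) = 0 ∧
    ∑ z ∈ confs n m, stProb n m z * ((z i : ℝ) - m / n) ^ 2 = m / n * (1 - 1 / n) ∧
    ∑ z ∈ confs n m, stProb n m z * ((z i : ℝ) - m / n) ^ 3 ≤ m / n := by
  obtain ⟨h1, h2, h3⟩ := factorial_moments hn m i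
  have h0 := sum_stProb hn m
  have hn' : (n : ℝ) ≠ 0 := by positivity
  have hn1 : (1 : ℝ) ≤ n := by exact_mod_cast hn
  set μ : ℝ := m / n with hμ
  refine ⟨?_, ?_, ?_⟩
  · have e : ∀ z ∈ confs n m, stProb n m z * ((z i : ℝ) - μ)
        = stProb n m z * (z i : ℝ) - μ * stProb n m z := fun z _ => by ring
    rw [sum_congr rfl e, sum_sub_distrib, ← mul_sum, h0, h1]
    ring
  · have e : ∀ z ∈ confs n m, stProb n m z * ((z i : ℝ) - μ) ^ 2
        = stProb n m z * ((z i : ℝ) * (z i - 1)) + (1 - 2 * μ) * (stProb n m z * (z i : ℝ))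
          + μ ^ 2 * stProb n m z := fun z _ => by ring
    rw [sum_congr rfl e, sum_add_distrib, sum_add_distrib, ← mul_sum, ← mul_sum, h0, h1, h2, hμ]
    field_simp
    ring
  · have e : ∀ z ∈ confs n m, stProb n m z * ((z i : ℝ) - μ) ^ 3
        = stProb n m z * ((z i : ℝ) * (z i - 1) * (z i - 2))
          + (3 - 3 * μ) * (stProb n m z * ((z i : ℝ) * (z i - 1)))
          + (1 - 3 * μ + 3 * μ ^ 2) * (stProb n m z * (z i : ℝ))
          - μ ^ 3 * stProb n m z := fun z _ => by ring
    rw [sum_congr rfl e, sum_sub_distrib, sum_add_distrib, sum_add_distrib, ← mul_sum, ← mul_sum,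
      ← mul_sum, h0, h1, h2, h3]
    have e2 : (m * (m - 1) * (m - 2) / n ^ 3 + (3 - 3 * μ) * (m * (m - 1) / n ^ 2) +
        (1 - 3 * μ + 3 * μ ^ 2) * μ - μ ^ 3 * 1 : ℝ) = μ * ((1 - 1 / n) * (1 - 2 * (1 / n))) := by
      rw [hμ]
      field_simp
      ring
    rw [e2]
    have hq0 : 0 ≤ 1 / (n : ℝ) := by positivity
    have hq1 : 1 / (n : ℝ) ≤ 1 := by
      rw [div_le_one (by positivity)]
      exact hn1
    have hμ0 : 0 ≤ μ := by positivity
    have : (1 - 1 / (n : ℝ)) * (1 - 2 * (1 / n)) ≤ 1 := by nlinarith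
    nlinarith

/-- Second-order Jensen bound for the expected logarithm of a shifted bin count. -/
lemma expected_log_le {n : ℕ} (hn : 0 < n) (m : ℕ) (i : Fin n) {u : ℝ} (hu : 0 < u) :
    ∑ z ∈ confs n m, stProb n m z * Real.log (z i + u) ≤
      Real.log (m / n + u) - (m / n : ℝ) * (1 - 1 / n) / (2 * (m / n + u) ^ 2)
        + (m / n : ℝ) / (3 * (m / n + u) ^ 3) := by
  obtain ⟨h1, h2, h3⟩ := central_moments hn m i
  have h0 := sum_stProb hn m
  set μ : ℝ := m / n with hμ
  have hμ0 : 0 ≤ μ := by positivity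
  have hv : 0 < μ + u := by positivity
  set v := μ + u
  have hb : ∀ z ∈ confs n m, stProb n m z * Real.log (z i + u) ≤
      Real.log v * stProb n m z + 1 / v * (stProb n m z * ((z i : ℝ) - μ))
        - 1 / (2 * v ^ 2) * (stProb n m z * ((z i : ℝ) - μ) ^ 2)
        + 1 / (3 * v ^ 3) * (stProb n m z * ((z i : ℝ) - μ) ^ 3) := by
    intro z _
    have hz : (0 : ℝ) ≤ z i := by positivity
    set t := ((z i : ℝ) - μ) / v with ht
    have e : (z i : ℝ) + u = v * (1 + t) := by
      rw [ht, mul_add, mul_div_cancel₀ _ hv.ne']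
      simp only [v]
      ring
    have ht1 : 0 < 1 + t := by
      have : 0 < v * (1 + t) := by
        rw [← e]
        positivity
      exact (pos_iff_pos_of_mul_pos this).1 hv
    have hl := log_one_add_le_cubic (t := t) (by linarith)
    rw [e, Real.log_mul hv.ne' ht1.ne']
    have := mul_le_mul_of_nonneg_left hl (stProb_nonneg n m z)
    have e3 : Real.log v * stProb n m z + 1 / v * (stProb n m z * ((z i : ℝ) - μ))
        - 1 / (2 * v ^ 2) * (stProb n m z * ((z i : ℝ) - μ) ^ 2)
        + 1 / (3 * v ^ 3) * (stProb n m z * ((z i : ℝ) - μ) ^ 3) =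
        Real.log v * stProb n m z + stProb n m z * (t - t ^ 2 / 2 + t ^ 3 / 3) := by
      rw [ht]
      field_simp
      ring
    rw [e3]
    linarith
  refine (sum_le_sum hb).trans ?_
  rw [sum_add_distrib, sum_sub_distrib, sum_add_distrib, ← mul_sum, ← mul_sum, ← mul_sum,
    ← mul_sum, h0, h1, h2]
  have := mul_le_mul_of_nonneg_left h3 (show 0 ≤ 1 / (3 * v ^ 3) by positivity)
  have e4 : Real.log v - μ * (1 - 1 / n) / (2 * v ^ 2) + μ / (3 * v ^ 3) =
    Real.log v * 1 + 1 / v * 0 - 1 / (2 * v ^ 2) * (μ * (1 - 1 / n)) + 1 / (3 * v ^ 3) * μ := by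
    ring
  rw [e4]
  linarith

/-! ### Comparison of the planted distribution with a tilted multinomial distribution -/

/-- The factor `n p_i` by which the tilted multinomial distribution matched to the planting `a`
changes the probability of bin `i`. The probabilities `p_i = ((m - k) / n + a_i) / m` are such that
the tilted and the planted distribution have the same mean. -/
noncomputable def tilt (n m : ℕ) (a : Fin n → ℕ) (i : Fin n) : ℝ :=
  n * (((m : ℝ) - ∑ j, (a j : ℝ)) / n + a i) / m

/-- The multinomial distribution with the tilted probabilities, written as a density with respect
to the standard distribution. -/
noncomputable def tiltProb (n m : ℕ) (a : Fin n → ℕ) (z : Fin n → ℕ) : ℝ :=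
  stProb n m z * ∏ i, tilt n m a i ^ z i

lemma sum_tilt {n m : ℕ} (hn : 0 < n) (hm : 0 < m) (a : Fin n → ℕ) :
    ∑ i, tilt n m a i = n := by
  have hn' : (n : ℝ) ≠ 0 := by positivity
  have hm' : (m : ℝ) ≠ 0 := by positivity
  unfold tilt
  rw [← sum_div, ← mul_sum, sum_add_distrib]
  simp
  field_simp
  ring

lemma tilt_pos {n m : ℕ} (hn : 0 < n) {a : Fin n → ℕ} (ha : ∑ j, a j < m) (i : Fin n) :
    0 < tilt n m a i := by
  have hm : 0 < m := by omega
  have h : (0 : ℝ) < (m : ℝ) - ∑ j, (a j : ℝ) := by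
    have : ((∑ j, a j : ℕ) : ℝ) < m := by exact_mod_cast ha
    push_cast at this
    linarith
  unfold tilt
  positivity

lemma sum_tiltProb {n m : ℕ} (hn : 0 < n) (hm : 0 < m) (a : Fin n → ℕ) :
    ∑ z ∈ confs n m, tiltProb n m a z = 1 := by
  have h := sum_stProb_mul_prod (K := ℝ) n m (tilt n m a)
  rw [sum_tilt hn hm, div_self (by positivity), one_pow] at h
  exact h

lemma log_factorial_add (y a : ℕ) :
    Real.log (Nat.factorial (a + y)) - Real.log (Nat.factorial y) =
      ∑ s ∈ range a, Real.log (y + s + 1) := by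
  induction a with
  | zero => simp
  | succ a ih =>
    rw [sum_range_succ, ← ih, show a + 1 + y = (a + y) + 1 by ring, Nat.factorial_succ]
    push_cast
    rw [Real.log_mul (by positivity) (by positivity), show (y : ℝ) + a + 1 = a + y + 1 by ring]
    ring

/-- Relative entropy bound between the planted distribution, described by its unplanted balls `y`,
and the tilted multinomial distribution. The terms of order `m log m` cancel exactly by the choice
of the tilt. -/
lemma kl_bound {n N : ℕ} (hn : 0 < n) (hN : 0 < N) (a : Fin n → ℕ) :
    ∑ y ∈ confs n N, stProb n N y *
      Real.log (stProb n N y / tiltProb n (N + ∑ i, a i) a (a + y)) ≤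
    2 * (∑ i, (a i : ℝ) ^ 2) / ((N : ℝ) / n) ^ 2 + (∑ i, (a i : ℝ)) / (2 * N) := by
  set k := ∑ i, a i with hk
  set m := N + k with hm
  have hkR : ∑ i, (a i : ℝ) = k := by
    rw [hk]
    push_cast
    rfl
  have hmR : (m : ℝ) = N + k := by
    rw [hm]
    push_cast
    rfl
  have hm0 : 0 < m := by omega
  set μ : ℝ := N / n with hμ
  have hμ0 : 0 < μ := by positivity
  have hnμ : (n : ℝ) * μ = N := by rw [hμ]; field_simp
  have htilt : ∀ i, tilt n m a i = n * (μ + a i) / m := by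
    intro i
    unfold tilt
    rw [hkR, hmR, hμ]
    congr 3
    ring
  set D : ℝ := ∑ s ∈ range k, Real.log ((N : ℝ) + s + 1) with hD
  -- exact form of the logarithm of the density ratio
  have hlog : ∀ y ∈ confs n N, Real.log (stProb n N y / tiltProb n m a (a + y)) =
      (-D - N * Real.log n + m * Real.log m - ∑ i, (a i : ℝ) * Real.log (μ + a i)) +
      (∑ i, ∑ s ∈ range (a i), Real.log (y i + (s + 1)) -
        ∑ i, (y i : ℝ) * Real.log (μ + a i)) := by
    intro y hy
    have hay : a + y ∈ confs n m := by
      rw [mem_confs] at hy ⊢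
      simp only [Pi.add_apply, sum_add_distrib, hy]
      omega
    have hyR : ∑ i, (y i : ℝ) = N := by
      rw [← mem_confs.1 hy]
      push_cast
      rfl
    have hprod : ∀ w : Fin n → ℕ, Real.log (∏ i, (Nat.factorial (w i) : ℝ)) =
        ∑ i, Real.log (Nat.factorial (w i)) := fun w =>
      Real.log_prod fun i _ => by positivity
    have hst : ∀ (M : ℕ) (w : Fin n → ℕ), w ∈ confs n M → Real.log (stProb n M w) =
        Real.log (Nat.factorial M) - ∑ i, Real.log (Nat.factorial (w i)) - M * Real.log n := by
      intro M w hw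
      rw [stProb_of_mem hw, Real.log_mul (by positivity) (by positivity),
        Real.log_div (by positivity) (by positivity), hprod, Real.log_pow, Real.log_inv]
      ring
    have htp : ∀ i, 0 < tilt n m a i := fun i => tilt_pos hn (by omega) i
    have hti : Real.log (∏ i, tilt n m a i ^ (a + y) i) =
        ∑ i, ((a i : ℝ) + y i) * (Real.log (μ + a i) + (Real.log n - Real.log m)) := by
      rw [Real.log_prod fun i _ => (pow_pos (htp i) _).ne']
      refine sum_congr rfl fun i _ => ?_
      rw [Real.log_pow, htilt, Real.log_div (by positivity) (by positivity),
        Real.log_mul (by positivity) (by positivity)]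
      simp only [Pi.add_apply]
      push_cast
      ring
    have hti2 : ∑ i, ((a i : ℝ) + y i) * (Real.log (μ + a i) + (Real.log n - Real.log m)) =
        ∑ i, (a i : ℝ) * Real.log (μ + a i) + ∑ i, (y i : ℝ) * Real.log (μ + a i) +
          m * (Real.log n - Real.log m) := by
      have : ∀ i, ((a i : ℝ) + y i) * (Real.log (μ + a i) + (Real.log n - Real.log m)) =
          (a i : ℝ) * Real.log (μ + a i) + (y i : ℝ) * Real.log (μ + a i) +
          ((a i : ℝ) + y i) * (Real.log n - Real.log m) := fun i => by ring
      simp_rw [this]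
      rw [sum_add_distrib, sum_add_distrib, ← sum_mul, sum_add_distrib, hkR, hyR, hmR]
      ring
    have hfac : ∑ i, Real.log (Nat.factorial ((a + y) i)) -
        ∑ i, Real.log (Nat.factorial (y i)) =
        ∑ i, ∑ s ∈ range (a i), Real.log (y i + (s + 1)) := by
      rw [← sum_sub_distrib]
      refine sum_congr rfl fun i _ => ?_
      rw [Pi.add_apply, log_factorial_add]
      simp only [add_assoc]
    have hfacN : Real.log (Nat.factorial m) - Real.log (Nat.factorial N) = D := by
      rw [hD, ← log_factorial_add, hm, add_comm N k]
    rw [tiltProb, Real.log_div (stProb_pos hn hy).ne'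
      (mul_pos (stProb_pos hn hay) (prod_pos fun i _ => pow_pos (htp i) _)).ne',
      Real.log_mul (stProb_pos hn hay).ne' (prod_pos fun i _ => pow_pos (htp i) _).ne',
      hst N y hy, hst m _ hay, hti, hti2]
    linarith
  have hsum : ∑ y ∈ confs n N, stProb n N y * Real.log (stProb n N y / tiltProb n m a (a + y)) =
      (-D - N * Real.log n + m * Real.log m - ∑ i, (a i : ℝ) * Real.log (μ + a i)) +
      ∑ i, (∑ s ∈ range (a i), (∑ y ∈ confs n N, stProb n N y * Real.log (y i + (s + 1))) -
        μ * Real.log (μ + a i)) := by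
    set C := (-D - N * Real.log n + m * Real.log m - ∑ i, (a i : ℝ) * Real.log (μ + a i))
    clear_value C
    have e1 : ∀ y ∈ confs n N,
        stProb n N y * Real.log (stProb n N y / tiltProb n m a (a + y)) =
        C * stProb n N y +
          (∑ i, ∑ s ∈ range (a i), stProb n N y * Real.log (y i + (s + 1)) -
          ∑ i, Real.log (μ + a i) * (stProb n N y * (y i : ℝ))) := by
      intro y hy
      rw [hlog y hy, mul_add, mul_sub, mul_sum, mul_sum]
      simp_rw [mul_sum]
      rw [mul_comm C]
      congr 2
      exact sum_congr rfl fun i _ => by ring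
    rw [sum_congr rfl e1, sum_add_distrib, ← mul_sum, sum_stProb hn, mul_one, sum_sub_distrib]
    congr 1
    rw [sum_sub_distrib, sum_comm]
    congr 1
    · refine sum_congr rfl fun i _ => ?_
      rw [sum_comm]
    · rw [sum_comm]
      refine sum_congr rfl fun i _ => ?_
      rw [← mul_sum, (factorial_moments hn N i).1]
      ring
  rw [hsum]
  have hDle : logPrim m - logPrim N ≤ D := by
    have := le_sum_log (x := (N : ℝ)) (by positivity) k
    rwa [← hmR] at this
  have hbin : ∀ i, ∑ s ∈ range (a i),
      (∑ y ∈ confs n N, stProb n N y * Real.log (y i + (s + 1))) ≤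
      logPrim (μ + a i) - logPrim μ + 2 * (a i : ℝ) ^ 2 / μ ^ 2 + a i * (1 / n) / (2 * μ) := by
    intro i
    refine le_trans (sum_le_sum fun s _ => ?_) (bin_bound hμ0 (r := 1 / n) (by positivity) (a i))
    have := expected_log_le hn N i (u := (s : ℝ) + 1) (by positivity)
    simpa only [← add_assoc] using this
  have hall : ∑ i, (∑ s ∈ range (a i), (∑ y ∈ confs n N, stProb n N y * Real.log (y i + (s + 1)))
        - μ * Real.log (μ + a i)) ≤
      ∑ i, ((a i : ℝ) * Real.log (μ + a i) - (a i : ℝ) - μ * Real.log μ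
        + 2 * (a i : ℝ) ^ 2 / μ ^ 2 + a i * (1 / n) / (2 * μ)) := by
    refine sum_le_sum fun i _ => ?_
    have := hbin i
    unfold logPrim at this
    linarith
  have heq : ∑ i, ((a i : ℝ) * Real.log (μ + a i) - (a i : ℝ) - μ * Real.log μ
        + 2 * (a i : ℝ) ^ 2 / μ ^ 2 + a i * (1 / n) / (2 * μ)) =
      ∑ i, (a i : ℝ) * Real.log (μ + a i) - k - N * Real.log μ
        + 2 * (∑ i, (a i : ℝ) ^ 2) / μ ^ 2 + k / (2 * N) := by
    have e1 : ∑ _i : Fin n, μ * Real.log μ = N * Real.log μ := by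
      simp only [sum_const, card_univ, Fintype.card_fin, nsmul_eq_mul]
      rw [← mul_assoc, hnμ]
    have e2 : (k : ℝ) * (1 / n) / (2 * μ) = k / (2 * N) := by
      rw [← hnμ]
      field_simp
    rw [sum_add_distrib, sum_add_distrib, sum_sub_distrib, sum_sub_distrib, hkR, e1, ← sum_div,
      ← sum_div, ← sum_mul, ← mul_sum, hkR, e2]
  have hlogμ : Real.log μ = Real.log N - Real.log n := by
    rw [hμ, Real.log_div (by positivity) (by positivity)]
  rw [heq, hlogμ] at hall
  unfold logPrim at hDle
  rw [hkR]
  have e9 : (m : ℝ) - N = k := by rw [hmR]; ring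
  linarith

lemma plProb_nonneg (n m : ℕ) (a z : Fin n → ℕ) : 0 ≤ plProb n m a z := by
  unfold plProb
  split_ifs <;> positivity

lemma plProb_add {n N : ℕ} (a : Fin n → ℕ) {y : Fin n → ℕ} (hy : y ∈ confs n N) :
    plProb n (N + ∑ i, a i) a (a + y) = stProb n N y := by
  have h1 : ∑ i, (a + y) i = N + ∑ i, a i := by
    simp only [Pi.add_apply, sum_add_distrib, mem_confs.1 hy]
    omega
  rw [plProb, if_pos ⟨h1, fun i => by simp⟩, stProb_of_mem hy]
  simp

lemma sum_confs_shift {n N : ℕ} (a : Fin n → ℕ) (g : (Fin n → ℕ) → ℝ)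
    (hg : ∀ z, g z ≠ 0 → a ≤ z) :
    ∑ z ∈ confs n (N + ∑ i, a i), g z = ∑ y ∈ confs n N, g (a + y) := by
  classical
  rw [← sum_filter_of_ne (p := fun z => a ≤ z) (fun z _ h => hg z h)]
  refine sum_nbij' (fun z => z - a) (fun y => a + y) ?_ ?_ ?_ ?_ ?_
  · intro z hz
    rw [mem_filter, mem_confs] at hz
    rw [mem_confs]
    have h : ∑ i, (z - a) i + ∑ i, a i = ∑ i, z i := by
      rw [← sum_add_distrib]
      exact sum_congr rfl fun i _ => Nat.sub_add_cancel (hz.2 i)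
    omega
  · intro y hy
    rw [mem_confs] at hy
    rw [mem_filter, mem_confs]
    refine ⟨?_, le_self_add⟩
    simp only [Pi.add_apply, sum_add_distrib, hy]
    omega
  · intro z hz
    rw [mem_filter] at hz
    exact add_tsub_cancel_of_le hz.2
  · intro y _
    exact add_tsub_cancel_left a y
  · intro z hz
    rw [mem_filter] at hz
    rw [add_tsub_cancel_of_le hz.2]

lemma le_of_plProb_ne_zero {n m : ℕ} {a z : Fin n → ℕ} (h : plProb n m a z ≠ 0) : a ≤ z := by
  unfold plProb at h
  split_ifs at h with h'
  · exact h'.2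
  · exact absurd rfl h

lemma sum_plProb {n N : ℕ} (hn : 0 < n) (a : Fin n → ℕ) :
    ∑ z ∈ confs n (N + ∑ i, a i), plProb n (N + ∑ i, a i) a z = 1 := by
  rw [sum_confs_shift a _ (fun z h => le_of_plProb_ne_zero h), ← sum_stProb hn N]
  exact sum_congr rfl fun y hy => plProb_add a hy

lemma tiltProb_pos {n m : ℕ} (hn : 0 < n) {a : Fin n → ℕ} (ha : ∑ j, a j < m)
    {z : Fin n → ℕ} (hz : z ∈ confs n m) : 0 < tiltProb n m a z :=
  mul_pos (stProb_pos hn hz) (prod_pos fun i _ => pow_pos (tilt_pos hn ha i) _)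

/-- A Pinsker-type bound: the `L¹` distance is controlled by the Hellinger distance, and the
Hellinger distance by the relative entropy because `√x ≥ 1 + (log x) / 2`. -/
lemma l1_le_sqrt {n N : ℕ} (hn : 0 < n) (hN : 0 < N) (a : Fin n → ℕ) :
    ∑ z ∈ confs n (N + ∑ i, a i),
      |plProb n (N + ∑ i, a i) a z - tiltProb n (N + ∑ i, a i) a z| ≤
    2 * Real.sqrt (2 * (∑ i, (a i : ℝ) ^ 2) / ((N : ℝ) / n) ^ 2
      + (∑ i, (a i : ℝ)) / (2 * N)) := by
  have hkl := kl_bound hn hN a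
  set B := 2 * (∑ i, (a i : ℝ) ^ 2) / ((N : ℝ) / n) ^ 2 + (∑ i, (a i : ℝ)) / (2 * N)
  set m := N + ∑ i, a i with hm
  set P := plProb n m a
  set Q := tiltProb n m a
  have hP0 : ∀ z, 0 ≤ P z := plProb_nonneg n m a
  have hQpos : ∀ z ∈ confs n m, 0 < Q z := fun z hz => tiltProb_pos hn (by omega) hz
  have hP1 : ∑ z ∈ confs n m, P z = 1 := sum_plProb hn a
  have hQ1 : ∑ z ∈ confs n m, Q z = 1 := sum_tiltProb hn (by omega) a
  have hmem : ∀ y ∈ confs n N, a + y ∈ confs n m := by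
    intro y hy
    rw [mem_confs] at hy ⊢
    simp only [Pi.add_apply, sum_add_distrib, hy]
    omega
  -- lower bound on the Hellinger affinity
  have hBC : 1 - B / 2 ≤ ∑ z ∈ confs n m, Real.sqrt (P z) * Real.sqrt (Q z) := by
    rw [sum_confs_shift a _ (fun z h => le_of_plProb_ne_zero (m := m) (fun h0 => h (by
      simp only [P, h0, Real.sqrt_zero, zero_mul])))]
    have hterm : ∀ y ∈ confs n N, stProb n N y - 1 / 2 *
        (stProb n N y * Real.log (stProb n N y / Q (a + y))) ≤
        Real.sqrt (P (a + y)) * Real.sqrt (Q (a + y)) := by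
      intro y hy
      have hp : P (a + y) = stProb n N y := plProb_add a hy
      have hs := stProb_pos hn hy
      have hq := hQpos _ (hmem y hy)
      rw [hp]
      set p := stProb n N y
      set q := Q (a + y)
      have e : Real.sqrt p * Real.sqrt q = p * Real.exp (-(1 / 2) * Real.log (p / q)) := by
        have h1 : Real.exp (-(1 / 2) * Real.log (p / q)) = Real.sqrt (q / p) := by
          rw [Real.sqrt_eq_rpow, Real.rpow_def_of_pos (by positivity), ← inv_div p q,
            Real.log_inv]
          congr 1
          ring
        rw [h1, Real.sqrt_div' _ hs.le]
        have h2 : p = Real.sqrt p * Real.sqrt p := (Real.mul_self_sqrt hs.le).symm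
        have h3 : Real.sqrt p ≠ 0 := (Real.sqrt_pos.2 hs).ne'
        nth_rewrite 2 [h2]
        field_simp
      rw [e]
      have := Real.add_one_le_exp (-(1 / 2) * Real.log (p / q))
      have := mul_le_mul_of_nonneg_left this hs.le
      linarith
    refine le_trans ?_ (sum_le_sum hterm)
    rw [sum_sub_distrib, sum_stProb hn, ← mul_sum]
    linarith
  have hH : ∑ z ∈ confs n m, (Real.sqrt (P z) - Real.sqrt (Q z)) ^ 2 ≤ B := by
    have e : ∀ z ∈ confs n m, (Real.sqrt (P z) - Real.sqrt (Q z)) ^ 2 =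
        P z + Q z - 2 * (Real.sqrt (P z) * Real.sqrt (Q z)) := by
      intro z hz
      have h1 := Real.sq_sqrt (hP0 z)
      have h2 := Real.sq_sqrt (hQpos z hz).le
      linear_combination h1 + h2
    rw [sum_congr rfl e, sum_sub_distrib, sum_add_distrib, hP1, hQ1, ← mul_sum]
    linarith
  have hS : ∑ z ∈ confs n m, (Real.sqrt (P z) + Real.sqrt (Q z)) ^ 2 ≤ 4 := by
    have e : ∀ z ∈ confs n m, (Real.sqrt (P z) + Real.sqrt (Q z)) ^ 2 ≤ 2 * P z + 2 * Q z := by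
      intro z hz
      have h1 := Real.sq_sqrt (hP0 z)
      have h2 := Real.sq_sqrt (hQpos z hz).le
      nlinarith [sq_nonneg (Real.sqrt (P z) - Real.sqrt (Q z))]
    refine (sum_le_sum e).trans ?_
    rw [sum_add_distrib, ← mul_sum, ← mul_sum, hP1, hQ1]
    norm_num
  have hfac : ∀ z ∈ confs n m, |P z - Q z| =
      |Real.sqrt (P z) - Real.sqrt (Q z)| * (Real.sqrt (P z) + Real.sqrt (Q z)) := by
    intro z hz
    have h3 : 0 ≤ Real.sqrt (P z) + Real.sqrt (Q z) := by positivity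
    have h1 := Real.sq_sqrt (hP0 z)
    have h2 := Real.sq_sqrt (hQpos z hz).le
    have e : P z - Q z = (Real.sqrt (P z) - Real.sqrt (Q z)) *
        (Real.sqrt (P z) + Real.sqrt (Q z)) := by
      linear_combination -h1 + h2
    rw [e, abs_mul, abs_of_nonneg h3]
  rw [sum_congr rfl hfac]
  have hcs := sum_mul_sq_le_sq_mul_sq (confs n m)
    (fun z => |Real.sqrt (P z) - Real.sqrt (Q z)|) (fun z => Real.sqrt (P z) + Real.sqrt (Q z))
  simp only [sq_abs] at hcs
  have hB0 : 0 ≤ B := le_trans (sum_nonneg fun z _ => sq_nonneg _) hH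
  refine abs_le_of_sq_le_sq' ?_ (by positivity) |>.2
  rw [mul_pow, Real.sq_sqrt hB0]
  calc _ ≤ _ := hcs
    _ ≤ B * 4 := mul_le_mul hH hS (sum_nonneg fun z _ => sq_nonneg _) hB0
    _ = _ := by ring

lemma tvDist_eq_sum (n m : ℕ) (a : Fin n → ℕ) :
    tvDist n m a = 1 / 2 * ∑ z ∈ confs n m, |stProb n m z - plProb n m a z| := by
  unfold tvDist
  congr 1
  apply tsum_eq_sum
  intro z hz
  rw [mem_confs] at hz
  simp [stProb, plProb, hz]

/-- The total variation distance between the standard and the tilted multinomial distribution,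
written as the expectation of the positive part of one minus the likelihood ratio. -/
noncomputable def tiltTV (n m : ℕ) (a : Fin n → ℕ) : ℝ :=
  ∑ z ∈ confs n m, stProb n m z * max (1 - ∏ i, tilt n m a i ^ z i) 0

lemma tvDist_sub_tiltTV {n m : ℕ} (hn : 0 < n) {a : Fin n → ℕ} (ha : ∑ j, a j < m) :
    |tvDist n m a - tiltTV n m a| ≤
      Real.sqrt (2 * (∑ i, (a i : ℝ) ^ 2) / (((m : ℝ) - ∑ i, (a i : ℝ)) / n) ^ 2
        + (∑ i, (a i : ℝ)) / (2 * ((m : ℝ) - ∑ i, (a i : ℝ)))) := by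
  obtain ⟨N, rfl⟩ : ∃ N, m = N + ∑ j, a j := ⟨m - ∑ j, a j, by omega⟩
  have hN : 0 < N := by omega
  have hl1 := l1_le_sqrt hn hN a
  have hNR : ((N + ∑ j, a j : ℕ) : ℝ) - ∑ i, (a i : ℝ) = N := by
    push_cast
    ring
  rw [hNR]
  set m := N + ∑ j, a j
  have hT : tiltTV n m a = 1 / 2 * ∑ z ∈ confs n m, |stProb n m z - tiltProb n m a z| := by
    have e : ∀ z ∈ confs n m, stProb n m z * max (1 - ∏ i, tilt n m a i ^ z i) 0 =
        1 / 2 * |stProb n m z - tiltProb n m a z| +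
          1 / 2 * (stProb n m z - tiltProb n m a z) := by
      intro z _
      have h : stProb n m z - tiltProb n m a z =
          stProb n m z * (1 - ∏ i, tilt n m a i ^ z i) := by
        unfold tiltProb
        ring
      rw [h, abs_mul, abs_of_nonneg (stProb_nonneg n m z)]
      rcases le_total 0 (1 - ∏ i, tilt n m a i ^ z i) with h' | h'
      · rw [max_eq_left h', abs_of_nonneg h']
        ring
      · rw [max_eq_right h', abs_of_nonpos h']
        ring
    unfold tiltTV
    rw [sum_congr rfl e, sum_add_distrib, ← mul_sum, ← mul_sum, sum_sub_distrib,
      sum_stProb hn, sum_tiltProb hn (by omega)]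
    ring
  rw [tvDist_eq_sum, hT, ← mul_sub, ← sum_sub_distrib, abs_mul]
  have h1 : |∑ z ∈ confs n m, (|stProb n m z - plProb n m a z| -
      |stProb n m z - tiltProb n m a z|)| ≤
      ∑ z ∈ confs n m, |plProb n m a z - tiltProb n m a z| := by
    refine (abs_sum_le_sum_abs _ _).trans (sum_le_sum fun z _ => ?_)
    refine (abs_abs_sub_abs_le_abs_sub _ _).trans_eq ?_
    rw [abs_sub_comm]
    congr 1
    ring
  rw [abs_of_pos (by norm_num : (0 : ℝ) < 1 / 2)]
  linarith

/-! ### Characteristic function of the log-likelihood ratio -/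

/-- Second-order expansion of `(1 + x) ^ (i t)` at `x = 0`. -/
lemma exp_log_taylor (t : ℝ) :
    (fun x : ℝ => Complex.exp (t * Real.log (1 + x) * Complex.I) -
      (1 + Complex.I * t * x + Complex.I * t * (Complex.I * t - 1) / 2 * x ^ 2))
      =o[𝓝 0] (fun x : ℝ => x ^ 2) := by
  have hlog3 : (fun x : ℝ => Real.log (1 + x) - (x - x ^ 2 / 2)) =O[𝓝 0]
      (fun x : ℝ => x ^ 3) := by
    rw [Asymptotics.isBigO_iff]
    refine ⟨2, ?_⟩
    have hev : ∀ᶠ x : ℝ in 𝓝 0, |x| < 1 / 2 := by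
      have : Metric.ball (0 : ℝ) (1 / 2) ∈ 𝓝 (0 : ℝ) := Metric.ball_mem_nhds _ (by norm_num)
      filter_upwards [this] with x hx
      simpa using hx
    filter_upwards [hev] with x hx
    have h := Real.abs_log_sub_add_sum_range_le (x := -x) (by rw [abs_neg]; linarith) 2
    simp only [sum_range_succ, range_zero, sum_empty, abs_neg, sub_neg_eq_add] at h
    norm_num at h
    rw [Real.norm_eq_abs, Real.norm_eq_abs, abs_pow]
    have e : Real.log (1 + x) - (x - x ^ 2 / 2) = -x + x ^ 2 / 2 + Real.log (1 + x) := by ring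
    rw [e]
    refine h.trans ?_
    rw [div_le_iff₀ (by linarith)]
    nlinarith [pow_nonneg (abs_nonneg x) 3]
  have hxx : (fun x : ℝ => x ^ 3) =o[𝓝 0] (fun x : ℝ => x ^ 2) :=
    Asymptotics.isLittleO_pow_pow (by norm_num)
  have h21 : (fun x : ℝ => x ^ 2) =O[𝓝 0] (fun x : ℝ => x) := by
    simpa using (Asymptotics.isLittleO_pow_pow (𝕜 := ℝ) (m := 1) (n := 2) (by norm_num)).isBigO
  have h32 := hxx.isBigO
  have hu : (fun x : ℝ => Real.log (1 + x)) =O[𝓝 0] (fun x : ℝ => x) := by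
    have h1 : (fun x : ℝ => x - x ^ 2 / 2) =O[𝓝 0] (fun x : ℝ => x) := by
      refine (Asymptotics.isBigO_refl _ _).sub ?_
      simpa [div_eq_inv_mul] using h21.const_mul_left (2⁻¹ : ℝ)
    simpa using ((hlog3.trans h32).trans h21).add h1
  have hsq : (fun x : ℝ => Real.log (1 + x) ^ 2 - x ^ 2) =o[𝓝 0] (fun x : ℝ => x ^ 2) := by
    have h1 : (fun x : ℝ => Real.log (1 + x) - x) =O[𝓝 0] (fun x : ℝ => x ^ 2) := by
      have := (hlog3.trans h32).sub
        ((Asymptotics.isBigO_refl (fun x : ℝ => x ^ 2) (𝓝 0)).const_mul_left (1 / 2 : ℝ))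
      refine this.congr_left fun x => ?_
      ring
    have h2 : (fun x : ℝ => Real.log (1 + x) + x) =O[𝓝 0] (fun x : ℝ => x) :=
      hu.add (Asymptotics.isBigO_refl _ _)
    refine ((h1.mul h2).congr (fun x => ?_) (fun x => ?_)).trans_isLittleO hxx <;> ring
  have hw : Tendsto (fun x : ℝ => (t * Real.log (1 + x) * Complex.I : ℂ)) (𝓝 0) (𝓝 0) := by
    have hc : ContinuousAt (fun x : ℝ => Real.log (1 + x)) 0 :=
      ContinuousAt.log (by fun_prop) (by norm_num)
    have h0 : Tendsto (fun x : ℝ => Real.log (1 + x)) (𝓝 0) (𝓝 0) := by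
      simpa [ContinuousAt] using hc
    have h1 := (Complex.continuous_ofReal.tendsto 0).comp h0
    have h2 := (h1.const_mul (t : ℂ)).mul_const Complex.I
    simpa [Function.comp_def] using h2
  have hexp := (Complex.exp_sub_sum_range_isBigO_pow 3).comp_tendsto hw
  have hcube : (fun x : ℝ => (t * Real.log (1 + x) * Complex.I : ℂ) ^ 3) =O[𝓝 0]
      (fun x : ℝ => x ^ 3) := by
    have hb : (fun x : ℝ => (t * Real.log (1 + x) * Complex.I : ℂ)) =O[𝓝 0]
        (fun x : ℝ => x) := by
      have : (fun x : ℝ => ((Real.log (1 + x) : ℝ) : ℂ)) =O[𝓝 0] (fun x : ℝ => x) := by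
        refine Asymptotics.IsBigO.of_norm_left ?_
        simpa only [Complex.norm_real] using hu.norm_left
      refine (this.const_mul_left (t * Complex.I)).congr_left fun x => ?_
      ring
    exact hb.pow 3
  have hA := (hexp.trans hcube).trans_isLittleO hxx
  have hB : (fun x : ℝ => Complex.I * t * ((Real.log (1 + x) - (x - x ^ 2 / 2) : ℝ) : ℂ))
      =o[𝓝 0] (fun x : ℝ => x ^ 2) := by
    refine Asymptotics.IsLittleO.const_mul_left (Asymptotics.IsLittleO.of_norm_left ?_) _
    simpa only [Complex.norm_real] using (hlog3.trans_isLittleO hxx).norm_left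
  have hC : (fun x : ℝ => (Complex.I * t) ^ 2 / 2 * ((Real.log (1 + x) ^ 2 - x ^ 2 : ℝ) : ℂ))
      =o[𝓝 0] (fun x : ℝ => x ^ 2) := by
    refine Asymptotics.IsLittleO.const_mul_left (Asymptotics.IsLittleO.of_norm_left ?_) _
    simpa only [Complex.norm_real] using hsq.norm_left
  refine ((hA.add hB).add hC).congr_left fun x => ?_
  simp only [Function.comp_apply, sum_range_succ, range_zero, sum_empty]
  push_cast
  simp [Nat.factorial]
  ring

/-- The compound-interest limit along an arbitrary sequence of exponents `M → ∞`. -/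
lemma tendsto_one_add_pow_of_tendsto_mul {M : ℕ → ℕ} {g : ℕ → ℂ} {s : ℂ}
    (hM : Tendsto M atTop atTop) (hg : Tendsto (fun n => (M n : ℂ) * g n) atTop (𝓝 s)) :
    Tendsto (fun n => (1 + g n) ^ M n) atTop (𝓝 (Complex.exp s)) := by
  have hMinv : Tendsto (fun n => ((M n : ℂ))⁻¹) atTop (𝓝 0) :=
    (tendsto_inv_atTop_nhds_zero_nat (𝕜 := ℂ)).comp hM
  have hM0 : ∀ᶠ n in atTop, (M n : ℂ) ≠ 0 := by
    filter_upwards [hM.eventually_gt_atTop 0] with n hn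
    exact_mod_cast hn.ne'
  have hg0 : Tendsto g atTop (𝓝 0) := by
    have := hMinv.mul hg
    rw [zero_mul] at this
    refine this.congr' ?_
    filter_upwards [hM0] with n hn
    field_simp
  have hlog : Tendsto (fun n => (M n : ℂ) * Complex.log (1 + g n)) atTop (𝓝 s) := by
    have h1 : (fun n => (M n : ℂ) * (Complex.log (1 + g n) - g n)) =O[atTop]
        (fun n => (M n : ℂ) * g n ^ 2) :=
      (Asymptotics.isBigO_refl _ _).mul (Complex.log_sub_self_isBigO.comp_tendsto hg0)
    have h2 : Tendsto (fun n => (M n : ℂ) * g n ^ 2) atTop (𝓝 0) := by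
      have := hg.mul hg0
      rw [mul_zero] at this
      refine this.congr fun n => ?_
      ring
    have h3 := (h1.trans_tendsto h2).add hg
    rw [zero_add] at h3
    refine h3.congr fun n => ?_
    ring
  refine ((Complex.continuous_exp.tendsto s).comp hlog).congr' ?_
  have hne : ∀ᶠ n in atTop, 1 + g n ≠ 0 := by
    have : Tendsto (fun n => 1 + g n) atTop (𝓝 1) := by simpa using hg0.const_add 1
    exact this.eventually_ne one_ne_zero
  filter_upwards [hne] with n hn
  rw [Function.comp_apply, Complex.exp_nat_mul, Complex.exp_log hn]

/-- The characteristic function of the log-likelihood ratio converges to that of the normal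
distribution with mean `-v / 2` and variance `v`. -/
lemma tendsto_charFun_tilt (A : (n : ℕ) → Fin n → ℕ) (m : ℕ → ℕ) (v : ℝ) (t : ℝ)
    (hm : Tendsto m atTop atTop)
    (hev : ∀ᶠ n in atTop, 0 < n ∧ 0 < m n)
    (hε : Tendsto (fun n => ∑ i, (tilt n (m n) (A n) i - 1) ^ 2) atTop (𝓝 0))
    (hv : Tendsto (fun n : ℕ => (m n : ℝ) / n * ∑ i, (tilt n (m n) (A n) i - 1) ^ 2)
      atTop (𝓝 v)) :
    Tendsto (fun n : ℕ => ((∑ i, Complex.exp (t * Real.log (tilt n (m n) (A n) i) * Complex.I)) /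
      (n : ℂ)) ^ m n) atTop
      (𝓝 (Complex.exp (t * (-v / 2 : ℝ) * Complex.I - v * t ^ 2 / 2))) := by
  set κ : ℂ := Complex.I * t * (Complex.I * t - 1) / 2 with hκ
  set R : ℝ → ℂ := fun x => Complex.exp (t * Real.log (1 + x) * Complex.I) -
      (1 + Complex.I * t * x + κ * x ^ 2) with hR
  have hRo : R =o[𝓝 0] (fun x : ℝ => x ^ 2) := exp_log_taylor t
  set S : ℕ → ℝ := fun n => ∑ i, (tilt n (m n) (A n) i - 1) ^ 2 with hS
  set r : ℕ → ℂ := fun n => ∑ i, R (tilt n (m n) (A n) i - 1) with hr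
  set g : ℕ → ℂ := fun n => (κ * S n + r n) / n with hg
  have hform : ∀ᶠ n : ℕ in atTop,
      (∑ i, Complex.exp (t * Real.log (tilt n (m n) (A n) i) * Complex.I)) / (n : ℂ) =
        1 + g n := by
    filter_upwards [hev] with n hn
    have hn0 : (n : ℂ) ≠ 0 := by exact_mod_cast hn.1.ne'
    have hsum : ∑ i, ((tilt n (m n) (A n) i - 1 : ℝ) : ℂ) = 0 := by
      rw [← Complex.ofReal_sum, sum_sub_distrib, sum_tilt hn.1 hn.2]
      simp
    have hx : ∀ i, Complex.exp (t * Real.log (tilt n (m n) (A n) i) * Complex.I) =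
        R (tilt n (m n) (A n) i - 1) + (1 + Complex.I * t * ((tilt n (m n) (A n) i - 1 : ℝ) : ℂ)
          + κ * ((tilt n (m n) (A n) i - 1 : ℝ) : ℂ) ^ 2) := by
      intro i
      simp only [hR, add_sub_cancel]
      ring
    rw [sum_congr rfl fun i _ => hx i, sum_add_distrib, sum_add_distrib, sum_add_distrib,
      ← mul_sum, ← mul_sum, hsum]
    simp only [hg, hS, hr]
    push_cast
    field_simp
    simp
    ring
  -- the Taylor remainder is negligible since `max_i |ε_i| ≤ (∑ ε_i²)^{1/2} → 0`
  have hrem : Tendsto (fun n : ℕ => (m n : ℂ) / n * r n) atTop (𝓝 0) := by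
    have hlo : r =o[atTop] S := by
      rw [Asymptotics.isLittleO_iff]
      intro δ hδ
      have h1 := Asymptotics.isLittleO_iff.1 hRo hδ
      obtain ⟨η, hη, hball⟩ := Metric.eventually_nhds_iff.1 h1
      filter_upwards [hε.eventually (gt_mem_nhds (pow_pos hη 2))] with n hn
      have hS0 : 0 ≤ S n := sum_nonneg fun i _ => sq_nonneg _
      rw [Real.norm_of_nonneg hS0, hS, mul_sum]
      refine (norm_sum_le _ _).trans (sum_le_sum fun i _ => ?_)
      have hi : (tilt n (m n) (A n) i - 1) ^ 2 ≤ S n :=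
        single_le_sum (f := fun i => (tilt n (m n) (A n) i - 1) ^ 2)
          (fun i _ => sq_nonneg _) (mem_univ i)
      have := hball (y := tilt n (m n) (A n) i - 1) (by
        rw [dist_zero_right, Real.norm_eq_abs]
        exact abs_lt_of_sq_lt_sq (hi.trans_lt hn) hη.le)
      rwa [Real.norm_of_nonneg (sq_nonneg _)] at this
    have h2 : (fun n : ℕ => (m n : ℂ) / n * r n) =o[atTop]
        (fun n : ℕ => (m n : ℝ) / n * S n) := by
      refine Asymptotics.IsBigO.mul_isLittleO (Asymptotics.isBigO_of_le _ fun n => ?_) hlo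
      simp
    exact (Asymptotics.isLittleO_one_iff ℝ).1 (h2.trans_isBigO (hv.isBigO_one ℝ))
  have hmg : Tendsto (fun n => (m n : ℂ) * g n) atTop (𝓝 (κ * v)) := by
    have h1 : Tendsto (fun n : ℕ => (((m n : ℝ) / n * S n : ℝ) : ℂ)) atTop (𝓝 (v : ℂ)) :=
      (Complex.continuous_ofReal.tendsto v).comp hv
    have h2 := (h1.const_mul κ).add hrem
    rw [add_zero] at h2
    refine h2.congr fun n => ?_
    simp only [hg]
    push_cast
    ring
  have hfin := tendsto_one_add_pow_of_tendsto_mul hm hmg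
  have e : κ * v = t * (-v / 2 : ℝ) * Complex.I - v * t ^ 2 / 2 := by
    rw [hκ]
    push_cast
    linear_combination (t : ℂ) ^ 2 * v / 2 * Complex.I_sq
  rw [e] at hfin
  refine hfin.congr' ?_
  filter_upwards [hform] with n hn
  rw [hn]

/-! ### Central limit theorem for the tilted multinomial -/

/-- The law, under the standard distribution, of the log-likelihood ratio of the tilted
multinomial with respect to the standard one. -/
noncomputable def logLawTilt (n m : ℕ) (a : Fin n → ℕ) : MeasureTheory.Measure ℝ :=
  ∑ z ∈ confs n m, ENNReal.ofReal (stProb n m z) •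
    MeasureTheory.Measure.dirac (∑ i, (z i : ℝ) * Real.log (tilt n m a i))

lemma integral_logLawTilt {E : Type*} [NormedAddCommGroup E] [NormedSpace ℝ E] [CompleteSpace E]
    (n m : ℕ) (a : Fin n → ℕ) (f : ℝ → E) :
    ∫ x, f x ∂logLawTilt n m a =
      ∑ z ∈ confs n m, stProb n m z • f (∑ i, (z i : ℝ) * Real.log (tilt n m a i)) := by
  have hInt : ∀ x : ℝ, MeasureTheory.Integrable f (MeasureTheory.Measure.dirac x) := fun x =>
    MeasureTheory.integrable_dirac (by simp)
  unfold logLawTilt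
  rw [MeasureTheory.integral_finsetSum_measure
    (fun z _ => (hInt _).smul_measure ENNReal.ofReal_ne_top)]
  refine sum_congr rfl fun z _ => ?_
  rw [MeasureTheory.integral_smul_measure, MeasureTheory.integral_dirac,
    ENNReal.toReal_ofReal (stProb_nonneg n m z)]

lemma isProbabilityMeasure_logLawTilt {n : ℕ} (hn : 0 < n) (m : ℕ) (a : Fin n → ℕ) :
    MeasureTheory.IsProbabilityMeasure (logLawTilt n m a) := by
  constructor
  unfold logLawTilt
  simp only [MeasureTheory.Measure.coe_finsetSum, Finset.sum_apply,
    MeasureTheory.Measure.smul_apply, MeasureTheory.measure_univ, smul_eq_mul, mul_one]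
  rw [← ENNReal.ofReal_sum_of_nonneg (fun z _ => stProb_nonneg n m z), sum_stProb hn,
    ENNReal.ofReal_one]

lemma charFun_logLawTilt (n m : ℕ) (a : Fin n → ℕ) (t : ℝ) :
    MeasureTheory.charFun (logLawTilt n m a) t =
      ((∑ i, Complex.exp (t * Real.log (tilt n m a i) * Complex.I)) / (n : ℂ)) ^ m := by
  rw [MeasureTheory.charFun_apply_real, integral_logLawTilt]
  have h := sum_stProb_mul_prod (K := ℂ) n m
    (fun i => Complex.exp (t * Real.log (tilt n m a i) * Complex.I))
  refine Eq.trans (sum_congr rfl fun z _ => ?_) h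
  rw [Complex.real_smul]
  congr 1
  simp only [← Complex.exp_nat_mul, ← Complex.exp_sum]
  congr 1
  push_cast
  rw [mul_sum, sum_mul]
  exact sum_congr rfl fun i _ => by ring

lemma exp_sum_mul_log_tilt {n m : ℕ} (hn : 0 < n) {a : Fin n → ℕ} (ha : ∑ j, a j < m)
    (z : Fin n → ℕ) :
    Real.exp (∑ i, (z i : ℝ) * Real.log (tilt n m a i)) = ∏ i, tilt n m a i ^ z i := by
  rw [Real.exp_sum]
  refine prod_congr rfl fun i _ => ?_
  rw [Real.exp_nat_mul, Real.exp_log (tilt_pos hn ha i)]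

/-- The bounded continuous function `x ↦ (1 - eˣ)⁺`, whose mean under the law of the
log-likelihood ratio is a total variation distance. -/
noncomputable def posPartBCF : BoundedContinuousFunction ℝ ℝ :=
  BoundedContinuousFunction.ofNormedAddCommGroup (fun x => max (1 - Real.exp x) 0)
    (by fun_prop) 1 (by
      intro x
      rw [Real.norm_of_nonneg (le_max_right _ _)]
      exact max_le (by linarith [Real.exp_pos x]) zero_le_one)

lemma tendsto_tiltTV (A : (n : ℕ) → Fin n → ℕ) (m : ℕ → ℕ) (v : NNReal)
    (hm : Tendsto m atTop atTop)
    (hev : ∀ᶠ n in atTop, 0 < n ∧ ∑ j, A n j < m n)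
    (hε : Tendsto (fun n => ∑ i, (tilt n (m n) (A n) i - 1) ^ 2) atTop (𝓝 0))
    (hv : Tendsto (fun n : ℕ => (m n : ℝ) / n * ∑ i, (tilt n (m n) (A n) i - 1) ^ 2)
      atTop (𝓝 (v : ℝ))) :
    Tendsto (fun n => tiltTV n (m n) (A n)) atTop
      (𝓝 (∫ x, max (1 - Real.exp x) 0 ∂ProbabilityTheory.gaussianReal (-(v : ℝ) / 2) v)) := by
  obtain ⟨N, hN⟩ := eventually_atTop.1 hev
  rw [← tendsto_add_atTop_iff_nat N]
  let μ : ℕ → MeasureTheory.ProbabilityMeasure ℝ := fun n =>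
    ⟨logLawTilt (n + N) (m (n + N)) (A (n + N)),
      isProbabilityMeasure_logLawTilt (hN (n + N) (by omega)).1 _ _⟩
  let μ₀ : MeasureTheory.ProbabilityMeasure ℝ :=
    ⟨ProbabilityTheory.gaussianReal (-(v : ℝ) / 2) v, inferInstance⟩
  have hconv : Tendsto μ atTop (𝓝 μ₀) := by
    refine MeasureTheory.ProbabilityMeasure.tendsto_of_tendsto_charFun fun t => ?_
    have h1 := tendsto_charFun_tilt A m v t hm
      (hev.mono fun n hn => ⟨hn.1, by have := hn.2; omega⟩) hε hv
    rw [← tendsto_add_atTop_iff_nat N] at h1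
    have h2 : MeasureTheory.charFun (μ₀ : MeasureTheory.Measure ℝ) t =
        Complex.exp (t * (-(v : ℝ) / 2 : ℝ) * Complex.I - (v : ℝ) * t ^ 2 / 2) :=
      ProbabilityTheory.charFun_gaussianReal t
    rw [h2]
    refine h1.congr fun n => ?_
    exact (charFun_logLawTilt _ _ _ t).symm
  have hInt := (MeasureTheory.ProbabilityMeasure.tendsto_iff_forall_integral_tendsto.1 hconv)
    posPartBCF
  refine hInt.congr fun n => ?_
  have hn := hN (n + N) (by omega)
  refine (integral_logLawTilt _ _ _ _).trans (sum_congr rfl fun z _ => ?_)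
  rw [smul_eq_mul, ← exp_sum_mul_log_tilt hn.1 hn.2]
  rfl

/-! ### The Gaussian integral -/

lemma stdNormalCDF_eq (x : ℝ) :
    stdNormalCDF x = ∫ t in Set.Iic x, ProbabilityTheory.gaussianPDFReal 0 1 t := by
  unfold stdNormalCDF
  congr 1
  funext t
  simp only [ProbabilityTheory.gaussianPDFReal, NNReal.coe_one, mul_one, sub_zero]
  rw [div_eq_inv_mul]

lemma stdNormalCDF_neg (x : ℝ) : stdNormalCDF (-x) = 1 - stdNormalCDF x := by
  have htot := ProbabilityTheory.integral_gaussianPDFReal_eq_one 0 (one_ne_zero (α := NNReal))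
  have hInt := ProbabilityTheory.integrable_gaussianPDFReal 0 1
  have hsplit := MeasureTheory.integral_add_compl (measurableSet_Iic (a := x)) hInt
  rw [Set.compl_Iic, htot] at hsplit
  have hneg := integral_comp_neg_Iic (-x) (ProbabilityTheory.gaussianPDFReal 0 1)
  rw [neg_neg] at hneg
  have heven : ∀ t, ProbabilityTheory.gaussianPDFReal 0 1 (-t) =
      ProbabilityTheory.gaussianPDFReal 0 1 t := by
    intro t
    simp [ProbabilityTheory.gaussianPDFReal]
  simp only [heven] at hneg
  rw [stdNormalCDF_eq, stdNormalCDF_eq, hneg]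
  linarith

lemma setIntegral_gaussianPDFReal_Iic_zero (μ : ℝ) {v : NNReal} (hv : 0 < v) :
    ∫ x in Set.Iic 0, ProbabilityTheory.gaussianPDFReal μ v x =
      stdNormalCDF (-μ / Real.sqrt v) := by
  have hvR : (0 : ℝ) < v := by exact_mod_cast hv
  have hs : 0 < Real.sqrt v := Real.sqrt_pos.2 hvR
  rw [stdNormalCDF_eq, ← MeasureTheory.integral_indicator measurableSet_Iic,
    ← MeasureTheory.integral_indicator measurableSet_Iic]
  set g := Set.indicator (Set.Iic (0 : ℝ)) (ProbabilityTheory.gaussianPDFReal μ v) with hg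
  have h1 : ∫ x, g x = ∫ x, g (x + μ) :=
    (MeasureTheory.integral_add_right_eq_self g μ).symm
  have h2 := MeasureTheory.Measure.integral_comp_mul_left (fun x => g (x + μ)) (Real.sqrt v)
  rw [abs_of_pos (inv_pos.2 hs), smul_eq_mul] at h2
  have h3 : ∫ x, g x = Real.sqrt v * ∫ x, g (Real.sqrt v * x + μ) := by
    rw [h1, h2]
    field_simp
  rw [h3, ← MeasureTheory.integral_const_mul]
  congr 1
  funext x
  have hiff : Real.sqrt v * x + μ ∈ Set.Iic (0 : ℝ) ↔ x ∈ Set.Iic (-μ / Real.sqrt v) := by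
    rw [Set.mem_Iic, Set.mem_Iic, le_div_iff₀ hs]
    constructor <;> intro h <;> linarith
  by_cases hx : x ∈ Set.Iic (-μ / Real.sqrt v)
  · rw [hg, Set.indicator_of_mem (hiff.2 hx), Set.indicator_of_mem hx]
    simp only [ProbabilityTheory.gaussianPDFReal, NNReal.coe_one, mul_one, sub_zero,
      add_sub_cancel_right]
    rw [mul_pow, Real.sq_sqrt hvR.le, Real.sqrt_mul (by positivity)]
    have e : -((v : ℝ) * x ^ 2) / (2 * v) = -x ^ 2 / 2 := by
      field_simp
    rw [e]
    field_simp
  · rw [hg, Set.indicator_of_notMem (fun h => hx (hiff.1 h)), Set.indicator_of_notMem hx, mul_zero]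

lemma integral_posPart_gaussianReal {v : NNReal} (hv : 0 < v) :
    ∫ x, max (1 - Real.exp x) 0 ∂ProbabilityTheory.gaussianReal (-(v : ℝ) / 2) v =
      2 * stdNormalCDF (Real.sqrt v / 2) - 1 := by
  have hvR : (0 : ℝ) < v := by exact_mod_cast hv
  have hs : 0 < Real.sqrt v := Real.sqrt_pos.2 hvR
  rw [ProbabilityTheory.integral_gaussianReal_eq_integral_smul hv.ne']
  -- multiplying by `eˣ` moves the mean of the Gaussian density from `-v/2` to `v/2`
  have htilt : ∀ x, ProbabilityTheory.gaussianPDFReal (-(v : ℝ) / 2) v x * Real.exp x =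
      ProbabilityTheory.gaussianPDFReal ((v : ℝ) / 2) v x := by
    intro x
    simp only [ProbabilityTheory.gaussianPDFReal]
    rw [mul_assoc, ← Real.exp_add]
    congr 2
    field_simp
    ring
  have hfun : (fun x => ProbabilityTheory.gaussianPDFReal (-(v : ℝ) / 2) v x •
      max (1 - Real.exp x) 0) = Set.indicator (Set.Iic 0) (fun x =>
        ProbabilityTheory.gaussianPDFReal (-(v : ℝ) / 2) v x -
          ProbabilityTheory.gaussianPDFReal ((v : ℝ) / 2) v x) := by
    funext x
    rw [smul_eq_mul]
    by_cases hx : x ∈ Set.Iic (0 : ℝ)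
    · rw [Set.indicator_of_mem hx, max_eq_left (by linarith [Real.exp_le_one_iff.2 hx]),
        ← htilt]
      ring
    · rw [Set.indicator_of_notMem hx, max_eq_right, mul_zero]
      have : 0 ≤ x := by
        rw [Set.mem_Iic, not_le] at hx
        exact hx.le
      linarith [Real.one_le_exp this]
  rw [hfun, MeasureTheory.integral_indicator measurableSet_Iic, MeasureTheory.integral_sub
    (ProbabilityTheory.integrable_gaussianPDFReal _ _).integrableOn
    (ProbabilityTheory.integrable_gaussianPDFReal _ _).integrableOn,
    setIntegral_gaussianPDFReal_Iic_zero _ hv, setIntegral_gaussianPDFReal_Iic_zero _ hv]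
  have e1 : -(-(v : ℝ) / 2) / Real.sqrt v = Real.sqrt v / 2 := by
    field_simp
    rw [Real.sq_sqrt hvR.le]
  have e2 : -((v : ℝ) / 2) / Real.sqrt v = -(Real.sqrt v / 2) := by
    field_simp
    rw [Real.sq_sqrt hvR.le]
  rw [e1, e2, stdNormalCDF_neg]
  ring

/-! ### Asymptotics in the Hilly regime -/

lemma sum_tilt_sub_one_sq {n m : ℕ} (hn : 0 < n) (hm : 0 < m) (a : Fin n → ℕ) :
    ∑ i, (tilt n m a i - 1) ^ 2 = (n : ℝ) ^ 3 * plantV n a / (m : ℝ) ^ 2 := by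
  have hn' : (n : ℝ) ≠ 0 := by exact_mod_cast hn.ne'
  have hm' : (m : ℝ) ≠ 0 := by exact_mod_cast hm.ne'
  set k : ℝ := ∑ j, (a j : ℝ) with hk
  have e : ∀ i, (tilt n m a i - 1) ^ 2 =
      ((n : ℝ) ^ 2 * (a i : ℝ) ^ 2 - 2 * n * k * a i + k ^ 2) / (m : ℝ) ^ 2 := by
    intro i
    unfold tilt
    rw [← hk]
    field_simp
    ring
  rw [sum_congr rfl fun i _ => e i, ← sum_div, sum_add_distrib, sum_sub_distrib, ← mul_sum,
    ← mul_sum, ← hk]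
  simp only [sum_const, card_univ, Fintype.card_fin, nsmul_eq_mul, plantV, ← hk]
  field_simp
  ring

/-- In the Hilly regime, `TV_A(m,n) → 2Φ(1/(2√c)) − 1`. -/
theorem hilly_regime_tv_limit (A : (n : ℕ) → Fin n → ℕ) (m k : ℕ → ℕ)
    (hka : ∀ n, ∑ i, A n i = k n) (hkm : ∀ n, k n ≤ m n)
    (hk : Tendsto (fun n : ℕ => (k n : ℝ) / Real.sqrt n) atTop atTop)
    (c : ℝ) (hc : 0 < c) (hreg : HillyRegime A m k c) :
    Tendsto (fun n : ℕ => tvDist n (m n) (A n)) atTop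
      (𝓝 (2 * stdNormalCDF (1 / (2 * Real.sqrt c)) - 1)) := by
  obtain ⟨hX, hY⟩ := hreg
  have hkR : ∀ n, ∑ i, (A n i : ℝ) = k n := fun n => by exact_mod_cast hka n
  -- positivity of `V(A)` and `k` is forced by the divergence of `n^{3/2} V(A) / k`
  have hpos : ∀ᶠ n : ℕ in atTop, 0 < n ∧ 0 < plantV n (A n) ∧ 0 < k n := by
    filter_upwards [hX.eventually_gt_atTop 0, eventually_gt_atTop 0] with n h1 hn
    have hk0 : 0 < k n := by
      rcases Nat.eq_zero_or_pos (k n) with h | h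
      · simp [h] at h1
      · exact h
    refine ⟨hn, ?_, hk0⟩
    by_contra hV
    rw [not_lt] at hV
    have : (n : ℝ) ^ ((3 : ℝ) / 2) * plantV n (A n) / (k n : ℝ) ≤ 0 :=
      div_nonpos_of_nonpos_of_nonneg (mul_nonpos_of_nonneg_of_nonpos (by positivity) hV)
        (by positivity)
    linarith
  have hW : Tendsto (fun n : ℕ => (m n : ℝ) / ((k n : ℝ) * Real.sqrt n)) atTop atTop := by
    refine (hY.pos_mul_atTop hc hX).congr' ?_
    filter_upwards [hpos] with n hn
    obtain ⟨hn, hV, hk0⟩ := hn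
    have hnR : (0 : ℝ) < n := by exact_mod_cast hn
    have hkR : (0 : ℝ) < k n := by exact_mod_cast hk0
    have hs := Real.sqrt_pos.2 hnR
    have e : (n : ℝ) ^ ((3 : ℝ) / 2) = n * Real.sqrt n := by
      rw [Real.sqrt_eq_rpow, show (3 : ℝ) / 2 = 1 + 1 / 2 by norm_num, Real.rpow_add hnR,
        Real.rpow_one]
    have hsq := Real.sq_sqrt hnR.le
    rw [e]
    field_simp
    linear_combination (m n : ℝ) * hsq
  have hU : Tendsto (fun n : ℕ => (m n : ℝ) / n) atTop atTop := by
    refine (hW.atTop_mul_atTop₀ hk).congr' ?_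
    filter_upwards [hpos] with n hn
    obtain ⟨hn, hV, hk0⟩ := hn
    have hnR : (0 : ℝ) < n := by exact_mod_cast hn
    have hkR : (0 : ℝ) < k n := by exact_mod_cast hk0
    have hs := Real.sqrt_pos.2 hnR
    have hsq := Real.sq_sqrt hnR.le
    field_simp
    linear_combination -(m n : ℝ) * hsq
  have hm : Tendsto m atTop atTop := by
    rw [← tendsto_natCast_atTop_iff (R := ℝ)]
    refine tendsto_atTop_mono' _ ?_ hU
    filter_upwards [eventually_gt_atTop 0] with n hn
    exact div_le_self (by positivity) (by exact_mod_cast hn)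
  have hρ : Tendsto (fun n : ℕ => (k n : ℝ) / m n) atTop (𝓝 0) := by
    have hsqrt : Tendsto (fun n : ℕ => Real.sqrt n) atTop atTop :=
      Real.tendsto_sqrt_atTop.comp tendsto_natCast_atTop_atTop
    refine (hW.atTop_mul_atTop₀ hsqrt).inv_tendsto_atTop.congr' ?_
    filter_upwards [hpos] with n hn
    have hs := Real.sqrt_pos.2 (show (0 : ℝ) < n by exact_mod_cast hn.1)
    simp only [Pi.inv_apply]
    rw [← inv_div (m n : ℝ) (k n)]
    congr 1
    field_simp
  have hev : ∀ᶠ n : ℕ in atTop, 0 < n ∧ k n < m n := by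
    filter_upwards [hpos, hρ.eventually (gt_mem_nhds one_pos), hm.eventually_gt_atTop 0]
      with n hn h1 hm0
    refine ⟨hn.1, ?_⟩
    have hmR : (0 : ℝ) < m n := by exact_mod_cast hm0
    rw [div_lt_one hmR] at h1
    exact_mod_cast h1
  set S : ℕ → ℝ := fun n => ∑ i, (tilt n (m n) (A n) i - 1) ^ 2 with hS
  have hSV : ∀ᶠ n : ℕ in atTop, S n = (n : ℝ) ^ 3 * plantV n (A n) / (m n : ℝ) ^ 2 := by
    filter_upwards [hev] with n hn
    exact sum_tilt_sub_one_sq hn.1 (by omega) _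
  have hv : Tendsto (fun n : ℕ => (m n : ℝ) / n * S n) atTop (𝓝 c⁻¹) := by
    refine (hY.inv₀ hc.ne').congr' ?_
    filter_upwards [hSV, hev, hpos] with n h1 h2 h3
    have hnR : (n : ℝ) ≠ 0 := by exact_mod_cast h2.1.ne'
    have hmR : (m n : ℝ) ≠ 0 := by exact_mod_cast (by omega : m n ≠ 0)
    rw [h1, inv_div]
    field_simp
  have hε : Tendsto S atTop (𝓝 0) := by
    have := hv.mul hU.inv_tendsto_atTop
    rw [mul_zero] at this
    refine this.congr' ?_
    filter_upwards [hev] with n h2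
    have hnR : (n : ℝ) ≠ 0 := by exact_mod_cast h2.1.ne'
    have hmR : (m n : ℝ) ≠ 0 := by exact_mod_cast (by omega : m n ≠ 0)
    simp only [Pi.inv_apply]
    field_simp
  have hcv : (Real.toNNReal c⁻¹ : ℝ) = c⁻¹ := Real.coe_toNNReal _ (inv_pos.2 hc).le
  have hT := tendsto_tiltTV A m (Real.toNNReal c⁻¹) hm
    (hev.mono fun n hn => ⟨hn.1, by rw [hka]; exact hn.2⟩) hε (by rw [hcv]; exact hv)
  rw [integral_posPart_gaussianReal (Real.toNNReal_pos.2 (inv_pos.2 hc)), hcv] at hT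
  have hlim : Real.sqrt c⁻¹ / 2 = 1 / (2 * Real.sqrt c) := by
    rw [Real.sqrt_inv]
    field_simp
  rw [hlim] at hT
  -- the comparison error of `tvDist_sub_tiltTV`, rewritten through quantities tending to zero
  have herr : Tendsto (fun n : ℕ =>
      Real.sqrt (2 * (∑ i, (A n i : ℝ) ^ 2) / (((m n : ℝ) - ∑ i, (A n i : ℝ)) / n) ^ 2
        + (∑ i, (A n i : ℝ)) / (2 * ((m n : ℝ) - ∑ i, (A n i : ℝ))))) atTop (𝓝 0) := by
    have hW2 := hW.inv_tendsto_atTop.pow 2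
    have h1ρ := hρ.const_sub 1
    have hlim := ((((hε.add hW2).const_mul 2).div (h1ρ.pow 2) (by norm_num)).add
      (hρ.div (h1ρ.const_mul 2) (by norm_num))).sqrt
    norm_num at hlim
    refine hlim.congr' ?_
    filter_upwards [hSV, hev, hpos] with n h1 h2 h3
    congr 1
    have hnR : (0 : ℝ) < n := by exact_mod_cast h2.1
    have hmR : (0 : ℝ) < m n := by exact_mod_cast (by omega : 0 < m n)
    have hkR' : (0 : ℝ) < k n := by exact_mod_cast h3.2.2
    have hmk : (0 : ℝ) < (m n : ℝ) - k n := by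
      have : (k n : ℝ) < m n := by exact_mod_cast h2.2
      linarith
    have hs := Real.sqrt_pos.2 hnR
    have hsq := Real.sq_sqrt hnR.le
    have hA2 : ∑ i, (A n i : ℝ) ^ 2 = n * plantV n (A n) + (k n : ℝ) ^ 2 / n := by
      unfold plantV
      rw [hkR]
      field_simp
      ring
    have hone : 1 - (k n : ℝ) / m n = ((m n : ℝ) - k n) / m n := by
      field_simp
    rw [h1, hkR, hA2, hone]
    congr 1
    · rw [div_pow, mul_pow, hsq]
      field_simp
    · field_simp
  have hdiff : Tendsto (fun n : ℕ => tvDist n (m n) (A n) - tiltTV n (m n) (A n)) atTop (𝓝 0) := by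
    refine squeeze_zero_norm' ?_ herr
    filter_upwards [hev] with n hn
    exact tvDist_sub_tiltTV hn.1 (by rw [hka]; exact hn.2)
  have := hdiff.add hT
  rw [zero_add] at this
  exact this.congr fun n => by ring
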